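/- Let 𝒲 be a weakly exact structure on an additive category 𝒜. Then the class 𝓘 of admissible monics of 𝒲 is a right weakly exact structure on 𝒜, and the class 𝓓 of admissible epics of 𝒲 is a left weakly exact structure on 𝒜; moreover 𝒲 coincides with the class of kernel–cokernel pairs (i, d) with i ∈ 𝓘 and d ∈ 𝓓, so every weakly exact structure arises by gluing a right and a left weakly exact structure. -/

import Mathlib

open CategoryTheory CategoryTheory.Limits ZeroObject

universe w v u

namespace WeaklyExactPaper

section Preamble

variable {C : Type u} [Category.{v} C] [Preadditive C] [HasZeroObject C] [HasBinaryBiproducts C]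

/-- `(i, d)` is a kernel–cokernel pair: `i` is a kernel of `d` and `d` is a cokernel of `i`. -/
structure IsKernelCokernelPair {A B Z : C} (i : A ⟶ B) (d : B ⟶ Z) : Prop where
  w : i ≫ d = 0
  isKernel : Nonempty (IsLimit (KernelFork.ofι i w))
  isCokernel : Nonempty (IsColimit (CokernelCofork.ofπ d w))

/-- Isomorphism of composable pairs `(i, d) ≅ (i', d')`. -/
def PairIso {A B Z A' B' Z' : C} (i : A ⟶ B) (d : B ⟶ Z) (i' : A' ⟶ B') (d' : B' ⟶ Z') : Prop :=
  ∃ (eA : A ≅ A') (eB : B ≅ B') (eZ : Z ≅ Z'),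
    i ≫ eB.hom = eA.hom ≫ i' ∧ d ≫ eZ.hom = eB.hom ≫ d'

/-- `f` is a kernel of some morphism. -/
def IsSomeKernel {A B : C} (f : A ⟶ B) : Prop :=
  ∃ (Z : C) (g : B ⟶ Z) (w : f ≫ g = 0), Nonempty (IsLimit (KernelFork.ofι f w))

/-- `g` is a cokernel of some morphism. -/
def IsSomeCokernel {B Z : C} (g : B ⟶ Z) : Prop :=
  ∃ (A : C) (f : A ⟶ B) (w : f ≫ g = 0), Nonempty (IsColimit (CokernelCofork.ofπ g w))

/-- `f` admits a cokernel. -/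
def AdmitsCokernel {A B : C} (f : A ⟶ B) : Prop :=
  ∃ (Z : C) (g : B ⟶ Z) (w : f ≫ g = 0), Nonempty (IsColimit (CokernelCofork.ofπ g w))

/-- `g` admits a kernel. -/
def AdmitsKernel {B Z : C} (g : B ⟶ Z) : Prop :=
  ∃ (A : C) (f : A ⟶ B) (w : f ≫ g = 0), Nonempty (IsLimit (KernelFork.ofι f w))

/-- A weakly exact structure on an additive category: a class of kernel–cokernel pairs,
closed under isomorphisms of composable pairs and binary direct sums, containing the pairs
`(1_X, X ⟶ 0)` and `(0 ⟶ X, 1_X)`, and satisfying the pushout axiom (E2) and the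
pullback axiom (E2)ᵒᵖ. -/
structure WeaklyExactStructure (C : Type u) [Category.{v} C] [Preadditive C]
    [HasZeroObject C] [HasBinaryBiproducts C] where
  W : ∀ ⦃A B Z : C⦄, (A ⟶ B) → (B ⟶ Z) → Prop
  kc_of_mem : ∀ {A B Z : C} {i : A ⟶ B} {d : B ⟶ Z}, W i d → IsKernelCokernelPair i d
  iso_closed : ∀ {A B Z A' B' Z' : C} {i : A ⟶ B} {d : B ⟶ Z} {i' : A' ⟶ B'} {d' : B' ⟶ Z'},
    W i d → PairIso i d i' d' → W i' d'
  sum_mem : ∀ {A₁ B₁ Z₁ A₂ B₂ Z₂ : C} {i₁ : A₁ ⟶ B₁} {d₁ : B₁ ⟶ Z₁} {i₂ : A₂ ⟶ B₂}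
    {d₂ : B₂ ⟶ Z₂}, W i₁ d₁ → W i₂ d₂ → W (biprod.map i₁ i₂) (biprod.map d₁ d₂)
  id_zero_mem : ∀ X : C, W (𝟙 X) (0 : X ⟶ (0 : C))
  zero_id_mem : ∀ X : C, W (0 : (0 : C) ⟶ X) (𝟙 X)
  pushout_mem : ∀ {A B Z A' : C} {i : A ⟶ B} {d : B ⟶ Z}, W i d → ∀ t : A ⟶ A',
    ∃ (S : C) (g : B ⟶ S) (i' : A' ⟶ S), IsPushout i t g i' ∧ ∃ (Z' : C) (d' : S ⟶ Z'), W i' d'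
  pullback_mem : ∀ {A B Z D : C} {i : A ⟶ B} {d : B ⟶ Z}, W i d → ∀ t : D ⟶ Z,
    ∃ (P : C) (p : P ⟶ B) (q : P ⟶ D), IsPullback p q d t ∧ ∃ (A'' : C) (i'' : A'' ⟶ P), W i'' q

/-- `i` is an admissible monic of `𝒲`. -/
def AdmissibleMonic (𝒲 : WeaklyExactStructure C) {A B : C} (i : A ⟶ B) : Prop :=
  ∃ (Z : C) (d : B ⟶ Z), 𝒲.W i d

/-- `d` is an admissible epic of `𝒲`. -/
def AdmissibleEpic (𝒲 : WeaklyExactStructure C) {B Z : C} (d : B ⟶ Z) : Prop :=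
  ∃ (A : C) (i : A ⟶ B), 𝒲.W i d

/-- `(i, d)` is a split kernel–cokernel pair. -/
def IsSplitPair {A B Z : C} (i : A ⟶ B) (d : B ⟶ Z) : Prop :=
  ∃ (X Y : C), PairIso (biprod.inl : X ⟶ X ⊞ Y) (biprod.snd : X ⊞ Y ⟶ Y) i d

end Preamble

section OneSided

variable {C : Type u} [Category.{v} C] [Preadditive C] [HasZeroObject C] [HasBinaryBiproducts C]

/-- A right weakly exact structure: a class of kernels closed under isomorphisms, containing
identities and zero monomorphisms `0 ⟶ X`, closed under pushouts (P), satisfying the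
cancellation axiom (Q) and closed under direct sums (S). -/
structure RightWeaklyExactStructure (C : Type u) [Category.{v} C] [Preadditive C]
    [HasZeroObject C] [HasBinaryBiproducts C] where
  I : ∀ ⦃A B : C⦄, (A ⟶ B) → Prop
  ker_of_mem : ∀ {A B : C} {f : A ⟶ B}, I f → IsSomeKernel f
  iso_closed : ∀ {A B A' B' : C} {f : A ⟶ B} {f' : A' ⟶ B'} (eA : A ≅ A') (eB : B ≅ B'),
    f ≫ eB.hom = eA.hom ≫ f' → I f → I f'
  id_mem : ∀ X : C, I (𝟙 X)
  zero_mem : ∀ X : C, I (0 : (0 : C) ⟶ X)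
  pushout_mem : ∀ {X Y X' : C} {f : X ⟶ Y}, I f → ∀ h : X ⟶ X',
    ∃ (Y' : C) (h' : Y ⟶ Y') (f' : X' ⟶ Y'), IsPushout f h h' f' ∧ I f'
  cancel_mem : ∀ {A B Z : C} (a : A ⟶ B) (b : B ⟶ Z), I (a ≫ b) → AdmitsCokernel a → I a
  sum_mem : ∀ {A B A' B' : C} {f : A ⟶ B} {f' : A' ⟶ B'}, I f → I f' → I (biprod.map f f')

/-- A left weakly exact structure: a class of cokernels closed under isomorphisms, containing
identities and zero epimorphisms `X ⟶ 0`, closed under pullbacks (Pᵒᵖ), satisfying the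
cancellation axiom (Qᵒᵖ) and closed under direct sums (Sᵒᵖ). -/
structure LeftWeaklyExactStructure (C : Type u) [Category.{v} C] [Preadditive C]
    [HasZeroObject C] [HasBinaryBiproducts C] where
  D : ∀ ⦃B Z : C⦄, (B ⟶ Z) → Prop
  coker_of_mem : ∀ {B Z : C} {g : B ⟶ Z}, D g → IsSomeCokernel g
  iso_closed : ∀ {B Z B' Z' : C} {g : B ⟶ Z} {g' : B' ⟶ Z'} (eB : B ≅ B') (eZ : Z ≅ Z'),
    g ≫ eZ.hom = eB.hom ≫ g' → D g → D g'
  id_mem : ∀ X : C, D (𝟙 X)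
  zero_mem : ∀ X : C, D (0 : X ⟶ (0 : C))
  pullback_mem : ∀ {B Z E : C} {f : B ⟶ Z}, D f → ∀ h : E ⟶ Z,
    ∃ (P : C) (p : P ⟶ B) (e : P ⟶ E), IsPullback p e f h ∧ D e
  cancel_mem : ∀ {A B Z : C} (a : A ⟶ B) (b : B ⟶ Z), D (a ≫ b) → AdmitsKernel b → D b
  sum_mem : ∀ {B Z B' Z' : C} {g : B ⟶ Z} {g' : B' ⟶ Z'}, D g → D g' → D (biprod.map g g')

end OneSided

/-!
The substance is the cancellation axiom (Q); (Qᵒᵖ) is (Q) for the opposite structure, and the other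
axioms are immediate. Let `d : Z ⟶ E` be the cokernel of an admissible monic `a ≫ b`, let
`c : B ⟶ F` be a cokernel of `a`, and let `e : F ⟶ E` be the map with `b ≫ d = c ≫ e`.

Pushing `a ≫ b` out along `a` gives `(b, c) : B ⟶ Z ⊞ F`, which is therefore an admissible monic,
with cokernel `(d, -e)`. Its being the kernel of `(d, -e)` says that `c` is the pullback of the
admissible epic `d` along `e`. So `c` is an admissible epic, and its kernel is `a`.
-/

section Squares

variable {C : Type u} [Category.{v} C]

lemma nonempty_isLimit_kernelFork_of_isPullback [HasZeroMorphisms C]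
    {K P X Y Z : C} {p : P ⟶ X} {q : P ⟶ Y} {f : X ⟶ Z} {g : Y ⟶ Z}
    (sq : IsPullback p q f g) {i : K ⟶ P} (wq : i ≫ q = 0) {wf : (i ≫ p) ≫ f = 0}
    (hi : Nonempty (IsLimit (KernelFork.ofι (i ≫ p) wf))) :
    Nonempty (IsLimit (KernelFork.ofι i wq)) := by
  obtain ⟨hi⟩ := hi
  have lifts {T : C} (x : T ⟶ P) (hx : x ≫ q = 0) : ∃ u : T ⟶ K, u ≫ i = x := by
    obtain ⟨u, hu⟩ := KernelFork.IsLimit.lift' hi (x ≫ p) (by simp [sq.w, reassoc_of% hx])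
    exact ⟨u, sq.hom_ext (by simpa using hu) (by simp [wq, hx])⟩
  have : Mono i := ⟨fun x y hxy => Fork.IsLimit.hom_ext hi (by simp [reassoc_of% hxy])⟩
  exact ⟨KernelFork.IsLimit.ofι' i wq fun x hx => ⟨_, (lifts x hx).choose_spec⟩⟩

lemma nonempty_isColimit_cokernelCofork_of_isPushout [HasZeroMorphisms C]
    {A B A' S Q : C} {f : A ⟶ B} {t : A ⟶ A'} {g : B ⟶ S} {f' : A' ⟶ S}
    (sq : IsPushout f t g f') {q : S ⟶ Q} (wq : f' ≫ q = 0) {wf : f ≫ g ≫ q = 0}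
    (hq : Nonempty (IsColimit (CokernelCofork.ofπ (g ≫ q) wf))) :
    Nonempty (IsColimit (CokernelCofork.ofπ q wq)) := by
  obtain ⟨hq⟩ := hq
  have descends {T : C} (x : S ⟶ T) (hx : f' ≫ x = 0) : ∃ u : Q ⟶ T, q ≫ u = x := by
    obtain ⟨u, hu⟩ := CokernelCofork.IsColimit.desc' hq (g ≫ x) (by simp [sq.w_assoc, hx])
    exact ⟨u, sq.hom_ext (by simpa using hu) (by simp [reassoc_of% wq, hx])⟩
  have : Epi q := ⟨fun x y hxy => Cofork.IsColimit.hom_ext hq (by simp [hxy])⟩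
  exact ⟨CokernelCofork.IsColimit.ofπ' q wq fun x hx => ⟨_, (descends x hx).choose_spec⟩⟩

lemma isPushout_comp_biprod_inl_lift [Preadditive C]
    {A B F Z : C} [HasBinaryBiproduct Z F] {a : A ⟶ B} {c : B ⟶ F} {w : a ≫ c = 0}
    (hc : IsColimit (CokernelCofork.ofπ c w)) (b : B ⟶ Z) :
    IsPushout (a ≫ b) a (biprod.inl : Z ⟶ Z ⊞ F) (biprod.lift b c) := by
  have hw : (a ≫ b) ≫ biprod.inl = a ≫ biprod.lift b c := by ext <;> simp [w]
  have descends (s : PushoutCocone (a ≫ b) a) : ∃ u : F ⟶ s.pt, c ≫ u = s.inr - b ≫ s.inl := by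
    obtain ⟨u, hu⟩ := CokernelCofork.IsColimit.desc' hc (s.inr - b ≫ s.inl)
      (by simp [← s.condition])
    exact ⟨u, hu⟩
  choose u hu using descends
  refine ⟨⟨hw⟩, ⟨PushoutCocone.IsColimit.mk hw (fun s => biprod.desc s.inl (u s))
    (by simp) (by simp [biprod.lift_desc, hu]) fun s m hinl hlift => ?_⟩⟩
  have hinr : biprod.inr ≫ m = u s := Cofork.IsColimit.hom_ext hc <| by
    simp [hu, ← hinl, ← hlift, biprod.lift_eq]
  exact biprod.hom_ext' _ _ (by simpa using hinl) (by simpa using hinr)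

end Squares

section Duality

variable {C : Type u} [Category.{v} C]

lemma biprod_opIso_inv_naturality [HasZeroMorphisms C] [HasBinaryBiproducts C]
    {X₁ X₂ Y₁ Y₂ : C} (f₁ : X₁ ⟶ Y₁) (f₂ : X₂ ⟶ Y₂) :
    biprod.map f₁.op f₂.op ≫ (biprod.opIso X₁ X₂).inv =
      (biprod.opIso Y₁ Y₂).inv ≫ (biprod.map f₁ f₂).op := by
  apply biprod.hom_ext' <;> simp [← op_comp]

lemma PairIso.unop {A B Z A' B' Z' : Cᵒᵖ} {i : A ⟶ B} {d : B ⟶ Z} {i' : A' ⟶ B'} {d' : B' ⟶ Z'}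
    (h : PairIso i d i' d') : PairIso d.unop i.unop d'.unop i'.unop := by
  obtain ⟨eA, eB, eZ, hi, hd⟩ := h
  exact ⟨eZ.symm.unop, eB.symm.unop, eA.symm.unop,
    congrArg Quiver.Hom.unop (CommSq.mk hd).vert_inv.w.symm,
    congrArg Quiver.Hom.unop (CommSq.mk hi).vert_inv.w.symm⟩

variable [Preadditive C]

lemma IsKernelCokernelPair.op {A B Z : C} {i : A ⟶ B} {d : B ⟶ Z}
    (h : IsKernelCokernelPair i d) : IsKernelCokernelPair d.op i.op where
  w := by rw [← op_comp, h.w, op_zero]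
  isKernel := h.isCokernel.map (CokernelCofork.IsColimit.ofπOp d h.w)
  isCokernel := h.isKernel.map (KernelFork.IsLimit.ofιOp i h.w)

variable [HasZeroObject C] [HasBinaryBiproducts C]

/-- The opposite weakly exact structure, which exchanges admissible monics and admissible epics. -/
def WeaklyExactStructure.op (𝒲 : WeaklyExactStructure C) : WeaklyExactStructure Cᵒᵖ where
  W _ _ _ i d := 𝒲.W d.unop i.unop
  kc_of_mem h := (𝒲.kc_of_mem h).op
  iso_closed h e := 𝒲.iso_closed h e.unop
  sum_mem {A₁ B₁ Z₁ A₂ B₂ Z₂ _ _ _ _} h₁ h₂ := 𝒲.iso_closed (𝒲.sum_mem h₁ h₂)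
    ⟨(biprod.opIso Z₁.unop Z₂.unop).symm.unop, (biprod.opIso B₁.unop B₂.unop).symm.unop,
      (biprod.opIso A₁.unop A₂.unop).symm.unop,
      congrArg Quiver.Hom.unop (biprod_opIso_inv_naturality _ _).symm,
      congrArg Quiver.Hom.unop (biprod_opIso_inv_naturality _ _).symm⟩
  id_zero_mem X := 𝒲.iso_closed (𝒲.zero_id_mem X.unop)
    ⟨(isZero_zero C).iso (isZero_zero Cᵒᵖ).unop, Iso.refl _, Iso.refl _,
      (isZero_zero C).eq_of_src _ _, by simp⟩
  zero_id_mem X := 𝒲.iso_closed (𝒲.id_zero_mem X.unop)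
    ⟨Iso.refl _, Iso.refl _, (isZero_zero C).iso (isZero_zero Cᵒᵖ).unop,
      by simp, (isZero_zero Cᵒᵖ).unop.eq_of_tgt _ _⟩
  pushout_mem h t := by
    obtain ⟨P, p, q, sq, A, i, hi⟩ := 𝒲.pullback_mem h t.unop
    exact ⟨.op P, p.op, q.op, sq.op.flip, .op A, i.op, hi⟩
  pullback_mem h t := by
    obtain ⟨S, g, i, sq, Z, d, hd⟩ := 𝒲.pushout_mem h t.unop
    exact ⟨.op S, g.op, i.op, sq.op.flip, .op Z, d.op, hd⟩

lemma admissibleMonic_op_iff {𝒲 : WeaklyExactStructure C} {B Z : C} {d : B ⟶ Z} :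
    AdmissibleMonic 𝒲.op d.op ↔ AdmissibleEpic 𝒲 d :=
  ⟨fun ⟨A, i, h⟩ => ⟨A.unop, i.unop, h⟩, fun ⟨A, i, h⟩ => ⟨.op A, i.op, h⟩⟩

end Duality

section Admissible

variable {C : Type u} [Category.{v} C] [Preadditive C] [HasZeroObject C] [HasBinaryBiproducts C]
  {𝒲 : WeaklyExactStructure C}

lemma AdmissibleMonic.of_iso {A B A' B' : C} {i : A ⟶ B} {i' : A' ⟶ B'}
    (hi : AdmissibleMonic 𝒲 i) (eA : A ≅ A') (eB : B ≅ B') (comm : i ≫ eB.hom = eA.hom ≫ i') :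
    AdmissibleMonic 𝒲 i' := by
  obtain ⟨Z, d, h⟩ := hi
  exact ⟨Z, eB.inv ≫ d, 𝒲.iso_closed h ⟨eA, eB, Iso.refl Z, comm, by simp⟩⟩

lemma AdmissibleEpic.of_iso {B Z B' Z' : C} {d : B ⟶ Z} {d' : B' ⟶ Z'}
    (hd : AdmissibleEpic 𝒲 d) (eB : B ≅ B') (eZ : Z ≅ Z') (comm : d ≫ eZ.hom = eB.hom ≫ d') :
    AdmissibleEpic 𝒲 d' :=
  admissibleMonic_op_iff.1 <| (admissibleMonic_op_iff.2 hd).of_iso eZ.op.symm eB.op.symm <|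
    congrArg Quiver.Hom.op (CommSq.mk comm).vert_inv.w.symm

lemma AdmissibleMonic.of_isPushout {A B A' S : C} {i : A ⟶ B} {t : A ⟶ A'} {g : B ⟶ S}
    {i' : A' ⟶ S} (hi : AdmissibleMonic 𝒲 i) (sq : IsPushout i t g i') :
    AdmissibleMonic 𝒲 i' := by
  obtain ⟨Z, d, h⟩ := hi
  obtain ⟨S', g', j, sq', hj⟩ := 𝒲.pushout_mem h t
  exact AdmissibleMonic.of_iso hj (Iso.refl A') (sq'.isoIsPushout _ _ sq) (by simp)

lemma AdmissibleEpic.of_isPullback {P B Z D : C} {p : P ⟶ B} {q : P ⟶ D} {d : B ⟶ Z}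
    {t : D ⟶ Z} (hd : AdmissibleEpic 𝒲 d) (sq : IsPullback p q d t) : AdmissibleEpic 𝒲 q :=
  admissibleMonic_op_iff.1 ((admissibleMonic_op_iff.2 hd).of_isPushout sq.op.flip)

lemma AdmissibleMonic.mem_of_isColimit {A B Z : C} {i : A ⟶ B} {d : B ⟶ Z}
    (hi : AdmissibleMonic 𝒲 i) {w : i ≫ d = 0}
    (hd : Nonempty (IsColimit (CokernelCofork.ofπ d w))) : 𝒲.W i d := by
  obtain ⟨Z', d', h⟩ := hi
  obtain ⟨hd⟩ := hd
  obtain ⟨hd'⟩ := (𝒲.kc_of_mem h).isCokernel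
  refine 𝒲.iso_closed h
    ⟨Iso.refl A, Iso.refl B, hd'.coconePointUniqueUpToIso hd, by simp, ?_⟩
  simpa using hd'.comp_coconePointUniqueUpToIso_hom hd .one

lemma AdmissibleEpic.mem_of_isLimit {A B Z : C} {i : A ⟶ B} {d : B ⟶ Z}
    (hd : AdmissibleEpic 𝒲 d) {w : i ≫ d = 0}
    (hi : Nonempty (IsLimit (KernelFork.ofι i w))) : 𝒲.W i d :=
  (admissibleMonic_op_iff.2 hd).mem_of_isColimit (hi.map (KernelFork.IsLimit.ofιOp i w))

lemma WeaklyExactStructure.mem_iff {A B Z : C} {i : A ⟶ B} {d : B ⟶ Z} :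
    𝒲.W i d ↔ IsKernelCokernelPair i d ∧ AdmissibleMonic 𝒲 i ∧ AdmissibleEpic 𝒲 d :=
  ⟨fun h => ⟨𝒲.kc_of_mem h, ⟨Z, d, h⟩, ⟨A, i, h⟩⟩,
    fun ⟨hkc, hi, _⟩ => hi.mem_of_isColimit hkc.isCokernel⟩

lemma isPullback_of_mem_of_isColimit {A B F Z E : C} {a : A ⟶ B} {b : B ⟶ Z}
    {c : B ⟶ F} {d : Z ⟶ E} {e : F ⟶ E} (h : 𝒲.W (a ≫ b) d) {w : a ≫ c = 0}
    (hc : IsColimit (CokernelCofork.ofπ c w)) (comm : b ≫ d = c ≫ e) :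
    IsPullback b c d e := by
  have sq : IsPushout (a ≫ b) a biprod.inl (biprod.lift b c) :=
    isPushout_comp_biprod_inl_lift hc b
  have hbc : AdmissibleMonic 𝒲 (biprod.lift b c) := AdmissibleMonic.of_isPushout ⟨E, d, h⟩ sq
  have hde : 𝒲.W (biprod.lift b c) (biprod.desc d (-e)) :=
    hbc.mem_of_isColimit (w := by simp [comm]) <|
      nonempty_isColimit_cokernelCofork_of_isPushout sq _
        (wf := by simpa using (𝒲.kc_of_mem h).w) (by simpa using (𝒲.kc_of_mem h).isCokernel)
  have comm_sq : CommSq b c d e := ⟨comm⟩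
  exact ⟨comm_sq, (𝒲.kc_of_mem hde).isKernel.map comm_sq.isLimitEquivIsLimitKernelFork.symm⟩

lemma AdmissibleMonic.of_comp {A B Z : C} {a : A ⟶ B} {b : B ⟶ Z}
    (hab : AdmissibleMonic 𝒲 (a ≫ b)) (ha : AdmitsCokernel a) : AdmissibleMonic 𝒲 a := by
  obtain ⟨E, d, hd⟩ := hab
  obtain ⟨F, c, w, ⟨hc⟩⟩ := ha
  have kc := 𝒲.kc_of_mem hd
  obtain ⟨e, he : c ≫ e = b ≫ d⟩ :=
    CokernelCofork.IsColimit.desc' hc (b ≫ d) (by simpa using kc.w)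
  have sq : IsPullback b c d e := isPullback_of_mem_of_isColimit hd hc he.symm
  have c_epic : AdmissibleEpic 𝒲 c := AdmissibleEpic.of_isPullback ⟨_, _, hd⟩ sq
  exact ⟨F, c, c_epic.mem_of_isLimit <|
    nonempty_isLimit_kernelFork_of_isPullback sq w kc.isKernel⟩

lemma AdmissibleEpic.of_comp {A B Z : C} {a : A ⟶ B} {b : B ⟶ Z}
    (hab : AdmissibleEpic 𝒲 (a ≫ b)) (hb : AdmitsKernel b) : AdmissibleEpic 𝒲 b := by
  obtain ⟨K, k, w, hk⟩ := hb
  have hb' : AdmitsCokernel b.op := ⟨.op K, k.op, _, hk.map (KernelFork.IsLimit.ofιOp k w)⟩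
  exact admissibleMonic_op_iff.1 (AdmissibleMonic.of_comp (admissibleMonic_op_iff.2 hab) hb')

/-- The right weakly exact structure formed by the admissible monics of `𝒲`. -/
def WeaklyExactStructure.admissibleMonics (𝒲 : WeaklyExactStructure C) :
    RightWeaklyExactStructure C where
  I _ _ i := AdmissibleMonic 𝒲 i
  ker_of_mem := fun ⟨Z, d, h⟩ => ⟨Z, d, (𝒲.kc_of_mem h).w, (𝒲.kc_of_mem h).isKernel⟩
  iso_closed eA eB comm hi := hi.of_iso eA eB comm
  id_mem X := ⟨_, _, 𝒲.id_zero_mem X⟩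
  zero_mem X := ⟨_, _, 𝒲.zero_id_mem X⟩
  pushout_mem := fun ⟨_, _, h⟩ t => 𝒲.pushout_mem h t
  cancel_mem _ _ hab ha := hab.of_comp ha
  sum_mem := fun ⟨_, _, h⟩ ⟨_, _, h'⟩ => ⟨_, _, 𝒲.sum_mem h h'⟩

/-- The left weakly exact structure formed by the admissible epics of `𝒲`. -/
def WeaklyExactStructure.admissibleEpics (𝒲 : WeaklyExactStructure C) :
    LeftWeaklyExactStructure C where
  D _ _ d := AdmissibleEpic 𝒲 d
  coker_of_mem := fun ⟨A, i, h⟩ => ⟨A, i, (𝒲.kc_of_mem h).w, (𝒲.kc_of_mem h).isCokernel⟩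
  iso_closed eB eZ comm hd := hd.of_iso eB eZ comm
  id_mem X := ⟨_, _, 𝒲.zero_id_mem X⟩
  zero_mem X := ⟨_, _, 𝒲.id_zero_mem X⟩
  pullback_mem := fun ⟨_, _, h⟩ t => 𝒲.pullback_mem h t
  cancel_mem _ _ hab hb := hab.of_comp hb
  sum_mem := fun ⟨_, _, h⟩ ⟨_, _, h'⟩ => ⟨_, _, 𝒲.sum_mem h h'⟩

end Admissible

section Statement

variable {C : Type u} [Category.{v} C] [Preadditive C] [HasZeroObject C] [HasBinaryBiproducts C]

/-- The admissible monics of a weakly exact structure form a right weakly exact structure,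
its admissible epics form a left weakly exact structure, and the weakly exact structure is
obtained by gluing the two. -/
theorem statement6 (𝒲 : WeaklyExactStructure C) :
    ∃ (ℛ : RightWeaklyExactStructure C) (ℒ : LeftWeaklyExactStructure C),
      (∀ {A B : C} (i : A ⟶ B), ℛ.I i ↔ AdmissibleMonic 𝒲 i) ∧
      (∀ {B Z : C} (d : B ⟶ Z), ℒ.D d ↔ AdmissibleEpic 𝒲 d) ∧
      (∀ {A B Z : C} (i : A ⟶ B) (d : B ⟶ Z),
        𝒲.W i d ↔ (IsKernelCokernelPair i d ∧ ℛ.I i ∧ ℒ.D d)) :=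
  ⟨𝒲.admissibleMonics, 𝒲.admissibleEpics, fun _ => Iff.rfl, fun _ => Iff.rfl,
    fun _ _ => WeaklyExactStructure.mem_iff⟩

end Statement

end WeaklyExactPaper
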